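/- arXiv:1211.0189 — 3 statements merged into one kernel-verified Lean document; each statement's English description precedes it below -/
import Mathlib

section
/- Let (f,g) be a Möbius pair of complex-valued arithmetic functions, not both identically zero. If the sum of 1/n over those natural numbers n in the support of g converges (i.e., supp(g) is thin), then the support of f possesses an asymptotic density, and this density is positive. -/
open Filter

open scoped Classical in
noncomputable def countIn (A : Set ℕ) (x : ℕ) : ℕ :=
  ((Finset.Icc 1 x).filter (fun n => n ∈ A)).card

/-- `A ⊆ ℕ` has asymptotic density `δ`. -/
def HasDensity (A : Set ℕ) (δ : ℝ) : Prop :=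
  Tendsto (fun x : ℕ => (countIn A x : ℝ) / x) atTop (nhds δ)

/-- `(f,g)` is a Möbius pair: `f(n) = ∑_{d ∣ n} g(d)` for all positive `n`. -/
def MobiusPair (f g : ℕ → ℂ) : Prop :=
  ∀ n : ℕ, 0 < n → f n = ∑ d ∈ n.divisors, g d

/-- `A` is thin: `∑_{a ∈ A} 1/a < ∞`. -/
def Thin (A : Set ℕ) : Prop := Summable (fun a : A => (1 : ℝ) / a)

/-!
Let `S` be the support of `g`. Whether `f n ≠ 0` depends only on the set of elements of `S` dividing
`n`. Replacing `S` by `S ∩ [1, T)` turns the support of `f` into a periodic set, and changes it only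
at multiples of elements of `S ∩ [T, ∞)`; by the union bound these make up a proportion at most
`∑_{s ∈ S, s ≥ T} 1/s` of every initial segment. Hence the densities of the periodic sets converge,
and their limit is the density of the support of `f`.

For positivity, fix `m` with `f m ≠ 0`, `T > m` and `M = (T - 1)!`. For `U ≥ T`, the `U`-truncation
contains every `n ≡ m (mod M)` without a divisor in `S ∩ [T, U)`. Among the `n ≡ m (mod M)`, the
multiples of `s` have relative density at most `gcd (M, s) / s ≤ m / s`, so each truncation
has density at least `(1 - m ∑_{s ∈ S, s ≥ T} 1/s) / M`, which for large `T` is positive, and does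
not depend on `U`.
-/

open scoped Topology Nat

section Counting

variable {A B : Set ℕ} {x : ℕ}

theorem countIn_setOf (p : ℕ → Prop) [DecidablePred p] (x : ℕ) :
    countIn {n | p n} x = ((Finset.Icc 1 x).filter p).card := by
  simp only [countIn, Set.mem_ofPred_eq]

theorem countIn_mono (h : ∀ n ∈ Finset.Icc 1 x, n ∈ A → n ∈ B) : countIn A x ≤ countIn B x := by
  classical
  exact Finset.card_le_card fun n hn ↦
    have ⟨hnx, hnA⟩ := Finset.mem_filter.1 hn
    Finset.mem_filter.2 ⟨hnx, h n hnx hnA⟩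

theorem countIn_union_le (A B : Set ℕ) (x : ℕ) :
    countIn (A ∪ B) x ≤ countIn A x + countIn B x := by
  classical
  simp only [countIn, Set.mem_union, Finset.filter_or]
  exact Finset.card_union_le _ _

theorem countIn_biUnion_le {ι : Type*} (F : Finset ι) (C : ι → Set ℕ) (x : ℕ) :
    countIn (⋃ i ∈ F, C i) x ≤ ∑ i ∈ F, countIn (C i) x := by
  classical
  refine le_trans (Finset.card_le_card fun n hn ↦ ?_) Finset.card_biUnion_le
  simp only [Finset.mem_filter, Set.mem_iUnion₂, Finset.mem_biUnion] at hn ⊢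
  obtain ⟨hnx, i, hi, hni⟩ := hn
  exact ⟨i, hi, hnx, hni⟩

theorem abs_countIn_sub_countIn_le {C : Set ℕ} (h : ∀ n ≠ 0, n ∉ C → (n ∈ A ↔ n ∈ B)) (x : ℕ) :
    |(countIn A x : ℝ) - countIn B x| ≤ countIn C x := by
  have le_add {A B : Set ℕ} (h : ∀ n ≠ 0, n ∉ C → n ∈ A → n ∈ B) :
      (countIn A x : ℝ) ≤ countIn B x + countIn C x := by
    have hABC : countIn A x ≤ countIn (B ∪ C) x := countIn_mono fun n hn hnA ↦
      or_iff_not_imp_right.2 fun hnC ↦ h n (by grind) hnC hnA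
    exact_mod_cast hABC.trans (countIn_union_le B C x)
  rw [abs_sub_le_iff, sub_le_iff_le_add', sub_le_iff_le_add']
  exact ⟨le_add fun n hn hnC ↦ (h n hn hnC).1, le_add fun n hn hnC ↦ (h n hn hnC).2⟩

open scoped Classical in
theorem countIn_eq_count (A : Set ℕ) (x : ℕ) : countIn A x = Nat.count (· + 1 ∈ A) x := by
  induction x with
  | zero => simp [countIn]
  | succ x ih =>
    rw [Nat.count_succ, ← ih, countIn, countIn,
      ← Finset.insert_Icc_right_eq_Icc_add_one (by lia), Finset.filter_insert]
    split_ifs with h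
    · rw [Finset.card_insert_of_notMem (by simp)]
    · rfl

theorem countIn_le (A : Set ℕ) (x : ℕ) : countIn A x ≤ x := by
  classical
  exact countIn_eq_count A x ▸ Nat.count_le _

theorem countIn_add_period {M : ℕ} (hA : Function.Periodic (· ∈ A) M) (x : ℕ) :
    countIn A (x + M) = countIn A x + countIn A M := by
  classical
  have shift (k : ℕ) : M + k + 1 ∈ A ↔ k + 1 ∈ A := by
    rw [show M + k + 1 = k + 1 + M by ring]
    exact (hA (k + 1)).to_iff
  simp only [countIn_eq_count, add_comm x M, Nat.count_add, shift, add_comm]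

theorem countIn_modEq_period {M : ℕ} (hM : 0 < M) (v : ℕ) :
    countIn {n | n ≡ v [MOD M]} M = 1 := by
  classical
  have hper : Function.Periodic (· ≡ v [MOD M]) M := fun n ↦ by simp [Nat.ModEq]
  have hcard := Nat.filter_Ico_card_eq_of_periodic 1 M (· ≡ v [MOD M]) hper
  rw [Nat.count_modEq_card M hM, Nat.div_self hM, Nat.mod_self, if_neg (Nat.not_lt_zero _),
    add_comm 1 M] at hcard
  rw [countIn_setOf]
  exact hcard

theorem countIn_dvd (s x : ℕ) : countIn {n | s ∣ n} x = x / s :=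
  (countIn_setOf _ x).trans (Nat.Ioc_filter_dvd_card_eq_div x s)

end Counting

section Density

variable {A B : Set ℕ} {a b : ℝ}

theorem HasDensity.congr (hA : HasDensity A a) (h : ∀ n ≠ 0, n ∈ A ↔ n ∈ B) :
    HasDensity B a := by
  have hcount (x : ℕ) : countIn A x = countIn B x :=
    le_antisymm (countIn_mono fun n hn ↦ (h n (by grind)).1)
      (countIn_mono fun n hn ↦ (h n (by grind)).2)
  simpa only [HasDensity, hcount] using hA

theorem HasDensity.le_add_sum {ι : Type*} {F : Finset ι} {C : ι → Set ℕ} {c : ι → ℝ}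
    (hA : HasDensity A a) (hB : HasDensity B b) (hC : ∀ i ∈ F, HasDensity (C i) (c i))
    (h : A ⊆ B ∪ ⋃ i ∈ F, C i) : a ≤ b + ∑ i ∈ F, c i := by
  refine le_of_tendsto_of_tendsto' hA (hB.add (tendsto_finsetSum F hC)) fun x ↦ ?_
  have hcount : countIn A x ≤ countIn B x + ∑ i ∈ F, countIn (C i) x :=
    calc countIn A x ≤ countIn (B ∪ ⋃ i ∈ F, C i) x := countIn_mono fun n _ hn ↦ h hn
      _ ≤ countIn B x + countIn (⋃ i ∈ F, C i) x := countIn_union_le _ _ x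
      _ ≤ countIn B x + ∑ i ∈ F, countIn (C i) x := by gcongr; exact countIn_biUnion_le F C x
  rw [← Finset.sum_div, ← add_div]
  gcongr
  exact_mod_cast hcount

theorem hasDensity_of_periodic {M : ℕ} (hM : 0 < M) (hA : Function.Periodic (· ∈ A) M) :
    HasDensity A ((countIn A M : ℝ) / M) := by
  set c : ℝ := (countIn A M : ℝ) / M
  have hc : c * M = countIn A M := div_mul_cancel₀ _ (by positivity)
  let error (x : ℕ) : ℝ := countIn A x - c * x
  have error_periodic : Function.Periodic error M := fun x ↦ by
    simp only [error, countIn_add_period hA, Nat.cast_add, mul_add, hc]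
    ring
  have abs_error_le (x : ℕ) : |error x| ≤ M := by
    rw [← error_periodic.map_mod_nat]
    have hcount : (countIn A (x % M) : ℝ) ≤ M :=
      mod_cast (countIn_le A _).trans (Nat.mod_lt x hM).le
    have hmean : c * (x % M : ℕ) ≤ M :=
      calc c * (x % M : ℕ) ≤ c * M := by gcongr; exact (Nat.mod_lt x hM).le
        _ ≤ M := by rw [hc]; exact_mod_cast countIn_le A M
    exact abs_sub_le_of_nonneg_of_le (by positivity) hcount (by positivity) hmean
  have error_tendsto : Tendsto (fun x : ℕ ↦ error x / x) atTop (𝓝 0) :=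
    tendsto_bdd_div_atTop_nhds_zero (.of_forall fun x ↦ (abs_le.1 (abs_error_le x)).1)
      (.of_forall fun x ↦ (abs_le.1 (abs_error_le x)).2) tendsto_natCast_atTop_atTop
  rw [HasDensity, ← zero_add c]
  refine (error_tendsto.add_const c).congr' ?_
  filter_upwards [eventually_ne_atTop 0] with x hx
  simp only [error]
  field_simp
  ring

theorem hasDensity_modEq {M : ℕ} (hM : 0 < M) (v : ℕ) :
    HasDensity {n | n ≡ v [MOD M]} (1 / M) := by
  simpa [countIn_modEq_period hM] using
    hasDensity_of_periodic (A := {n | n ≡ v [MOD M]}) hM fun n ↦ by simp [Nat.ModEq]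

theorem exists_hasDensity_modEq_and_dvd {M s : ℕ} (hM : 0 < M) (hs : 0 < s) (v : ℕ) :
    ∃ δ : ℝ, δ ≤ Nat.gcd M v / M * (1 / s) ∧ HasDensity {n | n ≡ v [MOD M] ∧ s ∣ n} δ := by
  by_cases hsol : ∃ r, r ≡ v [MOD M] ∧ s ∣ r
  · obtain ⟨r, hrv, hsr⟩ := hsol
    have dvd_iff (n : ℕ) : s ∣ n ↔ n ≡ r [MOD s] := by
      rw [Nat.ModEq, Nat.mod_eq_zero_of_dvd hsr, Nat.dvd_iff_mod_eq_zero]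
    have modEq_iff (n : ℕ) : n ≡ v [MOD M] ↔ n ≡ r [MOD M] :=
      ⟨(·.trans hrv.symm), (·.trans hrv)⟩
    have hclass : {n | n ≡ v [MOD M] ∧ s ∣ n} = {n | n ≡ r [MOD M.lcm s]} := by
      simp only [modEq_iff, dvd_iff, ← Int.natCast_modEq_iff,
        Int.modEq_and_modEq_iff_modEq_lcm, Int.lcm_natCast_natCast]
    have hgcd : M.gcd s ≤ M.gcd v := by
      rw [Nat.gcd_comm M v, ← hrv.gcd_eq, Nat.gcd_comm r M]
      exact Nat.le_of_dvd (Nat.gcd_pos_of_pos_left r hM) (Nat.gcd_dvd_gcd_of_dvd_right M hsr)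
    refine ⟨1 / M.lcm s, ?_, hclass ▸ hasDensity_modEq (Nat.lcm_pos hM hs) r⟩
    have hlcm : (M.gcd s * M.lcm s : ℝ) = M * s := mod_cast Nat.gcd_mul_lcm M s
    have hgcd_ne : (M.gcd s : ℝ) ≠ 0 := mod_cast (Nat.gcd_pos_of_pos_left s hM).ne'
    calc (1 : ℝ) / M.lcm s = M.gcd s / (M * s) := by
          rw [← hlcm, div_mul_cancel_left₀ hgcd_ne, one_div]
      _ ≤ M.gcd v / (M * s) := by gcongr
      _ = M.gcd v / M * (1 / s) := by ring
  · have hempty : {n | n ≡ v [MOD M] ∧ s ∣ n} = ∅ :=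
      Set.eq_empty_of_forall_notMem fun n hn ↦ hsol ⟨n, hn⟩
    refine ⟨0, by positivity, ?_⟩
    simp [hempty, HasDensity, countIn]

theorem exists_hasDensity_of_uniform_approx {B : ℕ → Set ℕ} {δ ε : ℕ → ℝ}
    (hB : ∀ T, HasDensity (B T) (δ T)) (hε : Tendsto ε atTop (𝓝 0))
    (h : ∀ T x, |(countIn A x : ℝ) - countIn (B T) x| ≤ x * ε T) :
    ∃ d, Tendsto δ atTop (𝓝 d) ∧ HasDensity A d := by
  have mean_dist_le (T x : ℕ) :
      dist ((countIn A x : ℝ) / x) ((countIn (B T) x : ℝ) / x) ≤ ε T := by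
    have hε_nonneg : 0 ≤ ε T := by simpa using (abs_nonneg _).trans (h T 1)
    rw [Real.dist_eq, ← sub_div, abs_div, Nat.abs_cast]
    exact div_le_of_le_mul₀ (by positivity) hε_nonneg (mul_comm (x : ℝ) _ ▸ h T x)
  have dist_le (T U : ℕ) : dist (δ T) (δ U) ≤ ε T + ε U :=
    le_of_tendsto' ((hB T).dist (hB U)) fun x ↦
      (dist_triangle_left _ _ ((countIn A x : ℝ) / x)).trans
        (add_le_add (mean_dist_le T x) (mean_dist_le U x))
  have hδ : CauchySeq δ := by
    rw [cauchySeq_iff_tendsto_dist_atTop_0]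
    refine squeeze_zero (fun _ ↦ dist_nonneg) (fun p ↦ dist_le p.1 p.2) ?_
    rw [← prod_atTop_atTop_eq]
    simpa using (hε.comp tendsto_fst).add (hε.comp tendsto_snd)
  have huniform : TendstoUniformly (fun T (x : ℕ) ↦ (countIn (B T) x : ℝ) / x)
      (fun x ↦ (countIn A x : ℝ) / x) atTop :=
    Metric.tendstoUniformly_iff.2 fun η hη ↦ (hε.eventually_lt_const hη).mono
      fun T hT x ↦ (mean_dist_le T x).trans_lt hT
  obtain ⟨d, hd⟩ := cauchySeq_tendsto_of_complete hδ
  exact ⟨d, hd, huniform.tendsto_of_eventually_tendsto (.of_forall hB) hd⟩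

end Density

section ReciprocalSum

/-- The sum of the reciprocals of the elements of `B`, in the convention of `Thin`: a possible
element `0` contributes `0`, and the value is meaningful only when `B` is thin. -/
noncomputable def reciprocalSum (B : Set ℕ) : ℝ := ∑' b : B, (1 : ℝ) / b

/-- The set of multiples of `B`, that is, the integers divisible by some element of `B`. -/
def multiplesOf (B : Set ℕ) : Set ℕ := {n | ∃ b ∈ B, b ∣ n}

variable {B S : Set ℕ}

theorem Thin.mono (hS : Thin S) (h : B ⊆ S) : Thin B := by
  have hsub : Summable ((fun a : S ↦ (1 : ℝ) / a) ∘ Set.inclusion h) :=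
    Summable.comp_injective hS (Set.inclusion_injective h)
  simpa only [Thin, Function.comp_def, Set.coe_inclusion] using hsub

theorem sum_one_div_le_reciprocalSum (hB : Thin B) {F : Finset ℕ} (hF : ∀ b ∈ F, b ∈ B) :
    ∑ b ∈ F, (1 : ℝ) / b ≤ reciprocalSum B := by
  classical
  rw [← Finset.sum_subtype_of_mem (fun b : ℕ ↦ (1 : ℝ) / b) hF]
  exact hB.sum_le_tsum _ fun _ _ ↦ by positivity

theorem tendsto_reciprocalSum_inter_Ici (hS : Thin S) :
    Tendsto (fun T ↦ reciprocalSum (S ∩ Set.Ici T)) atTop (𝓝 0) := by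
  let weight (n : ℕ) : ℝ := 1 / n
  have hsummable : Summable (S.indicator weight) := summable_subtype_iff_indicator.1 hS
  have hpointwise (n : ℕ) :
      Tendsto (fun T ↦ (S ∩ Set.Ici T).indicator weight n) atTop (𝓝 0) :=
    tendsto_const_nhds.congr' <| (eventually_gt_atTop n).mono fun T hT ↦
      (Set.indicator_of_notMem (fun hn ↦ hT.not_ge hn.2) weight).symm
  have hbound (T n : ℕ) : ‖(S ∩ Set.Ici T).indicator weight n‖ ≤ S.indicator weight n := by
    have hweight (k : ℕ) : 0 ≤ weight k := by positivity
    rw [Real.norm_of_nonneg (Set.indicator_nonneg (fun k _ ↦ hweight k) n)]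
    exact Set.indicator_le_indicator_of_subset Set.inter_subset_left hweight n
  have hsum (T : ℕ) :
      reciprocalSum (S ∩ Set.Ici T) = ∑' n, (S ∩ Set.Ici T).indicator weight n :=
    tsum_subtype _ weight
  simpa only [hsum, tsum_zero] using tendsto_tsum_of_dominated_convergence hsummable hpointwise
    (.of_forall fun T n ↦ hbound T n)

theorem countIn_multiplesOf_le (hB : Thin B) (x : ℕ) :
    (countIn (multiplesOf B) x : ℝ) ≤ x * reciprocalSum B := by
  classical
  let F := (Finset.Icc 1 x).filter (· ∈ B)
  have hcover : ∀ n ∈ Finset.Icc 1 x, n ∈ multiplesOf B → n ∈ ⋃ b ∈ F, {n | b ∣ n} := by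
    rintro n hn ⟨b, hb, hbn⟩
    have hn := Finset.mem_Icc.1 hn
    have hbF : b ∈ F := Finset.mem_filter.2
      ⟨Finset.mem_Icc.2 ⟨Nat.pos_of_dvd_of_pos hbn hn.1, (Nat.le_of_dvd hn.1 hbn).trans hn.2⟩, hb⟩
    exact Set.mem_biUnion hbF hbn
  have hcount : countIn (multiplesOf B) x ≤ ∑ b ∈ F, x / b := by
    simpa only [countIn_dvd] using (countIn_mono hcover).trans (countIn_biUnion_le F _ x)
  calc (countIn (multiplesOf B) x : ℝ) ≤ ∑ b ∈ F, ((x / b : ℕ) : ℝ) := mod_cast hcount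
    _ ≤ ∑ b ∈ F, x * ((1 : ℝ) / b) := by
      gcongr with b
      rw [mul_one_div]
      exact Nat.cast_div_le
    _ = x * ∑ b ∈ F, (1 : ℝ) / b := (Finset.mul_sum _ _ _).symm
    _ ≤ x * reciprocalSum B := by
      gcongr
      exact sum_one_div_le_reciprocalSum hB fun b hb ↦ (Finset.mem_filter.1 hb).2

end ReciprocalSum

section DivisorsIn

/-- The set of nonzero elements of `S` dividing `n`. Excluding `0`, which divides only `0`, makes
this periodic in `n` whenever `S` is finite. -/
def divisorsIn (S : Set ℕ) (n : ℕ) : Set ℕ := {d ∈ S | d ≠ 0 ∧ d ∣ n}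

variable {S : Set ℕ}

theorem divisorsIn_inter_Iio_eq {T n : ℕ} (hn : n ∉ multiplesOf (S ∩ Set.Ici T)) :
    divisorsIn (S ∩ Set.Iio T) n = divisorsIn S n := by
  ext d
  refine ⟨fun hd ↦ ⟨hd.1.1, hd.2⟩, fun hd ↦ ⟨⟨hd.1, ?_⟩, hd.2⟩⟩
  by_contra hdT
  exact hn ⟨d, ⟨hd.1, Set.notMem_Iio.1 hdT⟩, hd.2.2⟩

theorem notMem_multiplesOf_of_lt {m T : ℕ} (hm : m ≠ 0) (hmT : m < T) :
    m ∉ multiplesOf (S ∩ Set.Ici T) := fun ⟨_, hs, hsm⟩ ↦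
  (Nat.le_of_dvd (Nat.pos_of_ne_zero hm) hsm).not_gt (hmT.trans_le hs.2)

theorem divisorsIn_inter_Iio_congr {T n n' : ℕ} (h : n ≡ n' [MOD (T - 1)!]) :
    divisorsIn (S ∩ Set.Iio T) n = divisorsIn (S ∩ Set.Iio T) n' := by
  ext d
  refine and_congr_right fun hd ↦ and_congr_right fun hd0 ↦ h.dvd_iff ?_
  exact Nat.dvd_factorial (Nat.pos_of_ne_zero hd0) (Nat.le_sub_one_of_lt hd.2)

theorem divisorsIn_inter_Iio_eq_of_modEq {m n T U : ℕ} (hm : m ≠ 0) (hmT : m < T) (hTU : T ≤ U)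
    (hnm : n ≡ m [MOD (T - 1)!]) (hn : n ∉ multiplesOf (S ∩ Set.Iio U ∩ Set.Ici T)) :
    divisorsIn (S ∩ Set.Iio U) n = divisorsIn S m :=
  calc divisorsIn (S ∩ Set.Iio U) n = divisorsIn (S ∩ Set.Iio U ∩ Set.Iio T) n :=
        (divisorsIn_inter_Iio_eq hn).symm
    _ = divisorsIn (S ∩ Set.Iio T) n := by
      rw [Set.inter_assoc, Set.Iio_inter_Iio, min_eq_right hTU]
    _ = divisorsIn (S ∩ Set.Iio T) m := divisorsIn_inter_Iio_congr hnm
    _ = divisorsIn S m := divisorsIn_inter_Iio_eq (notMem_multiplesOf_of_lt hm hmT)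

theorem exists_hasDensity_divisorsIn_inter_Iio (S : Set ℕ) (P : Set (Set ℕ)) (T : ℕ) :
    ∃ δ, HasDensity {n | divisorsIn (S ∩ Set.Iio T) n ∈ P} δ :=
  ⟨_, hasDensity_of_periodic (Nat.factorial_pos (T - 1)) fun n ↦ by
    simp only [Set.mem_ofPred_eq, divisorsIn_inter_Iio_congr (Nat.add_modEq_right (a := n))]⟩

theorem exists_tendsto_hasDensity_divisorsIn (hS : Thin S) {P : Set (Set ℕ)} {δ : ℕ → ℝ}
    (hδ : ∀ T, HasDensity {n | divisorsIn (S ∩ Set.Iio T) n ∈ P} (δ T)) :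
    ∃ d, Tendsto δ atTop (𝓝 d) ∧ HasDensity {n | divisorsIn S n ∈ P} d := by
  refine exists_hasDensity_of_uniform_approx hδ (tendsto_reciprocalSum_inter_Ici hS) fun T x ↦ ?_
  refine (abs_countIn_sub_countIn_le (fun n _ hn ↦ ?_) x).trans
    (countIn_multiplesOf_le (hS.mono Set.inter_subset_left) x)
  simp only [Set.mem_ofPred_eq, divisorsIn_inter_Iio_eq hn]

theorem le_density_divisorsIn_inter_Iio (hS : Thin S) {P : Set (Set ℕ)} {m T U : ℕ} {δ : ℝ}
    (hm : m ≠ 0) (hmP : divisorsIn S m ∈ P) (hmT : m < T) (hTU : T ≤ U)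
    (hδ : HasDensity {n | divisorsIn (S ∩ Set.Iio U) n ∈ P} δ) :
    (1 - m * reciprocalSum (S ∩ Set.Ici T)) / (T - 1)! ≤ δ := by
  classical
  set M := (T - 1)!
  have hM : 0 < M := Nat.factorial_pos _
  let F := (Finset.Ico T U).filter (· ∈ S)
  have mem_F {s : ℕ} : s ∈ F ↔ (T ≤ s ∧ s < U) ∧ s ∈ S := by simp [F]
  have hclass (s : ℕ) (hs : s ∈ F) := exists_hasDensity_modEq_and_dvd hM
    ((Nat.zero_le m).trans_lt (hmT.trans_le (mem_F.1 hs).1.1)) m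
  choose! c hc hdensity using hclass
  have hcover : {n | n ≡ m [MOD M]} ⊆
      {n | divisorsIn (S ∩ Set.Iio U) n ∈ P} ∪ ⋃ s ∈ F, {n | n ≡ m [MOD M] ∧ s ∣ n} := by
    intro n hnm
    refine or_iff_not_imp_right.2 fun hnF ↦ ?_
    have hn : n ∉ multiplesOf (S ∩ Set.Iio U ∩ Set.Ici T) := fun ⟨s, ⟨⟨hsS, hsU⟩, hTs⟩, hsn⟩ ↦
      hnF (Set.mem_biUnion (mem_F.2 ⟨⟨hTs, hsU⟩, hsS⟩) ⟨hnm, hsn⟩)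
    rw [Set.mem_ofPred_eq, divisorsIn_inter_Iio_eq_of_modEq hm hmT hTU hnm hn]
    exact hmP
  have hsum : ∑ s ∈ F, c s ≤ m * reciprocalSum (S ∩ Set.Ici T) / M :=
    calc ∑ s ∈ F, c s ≤ ∑ s ∈ F, (M.gcd m : ℝ) / M * (1 / s) := Finset.sum_le_sum hc
      _ = (M.gcd m : ℝ) / M * ∑ s ∈ F, (1 : ℝ) / s := (Finset.mul_sum _ _ _).symm
      _ ≤ (m : ℝ) / M * reciprocalSum (S ∩ Set.Ici T) := by
        gcongr
        · exact Nat.gcd_le_right M (Nat.pos_of_ne_zero hm)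
        · exact sum_one_div_le_reciprocalSum (hS.mono Set.inter_subset_left) fun s hs ↦
            ⟨(mem_F.1 hs).2, (mem_F.1 hs).1.1⟩
      _ = m * reciprocalSum (S ∩ Set.Ici T) / M := by ring
  have hle : (1 : ℝ) / M ≤ δ + ∑ s ∈ F, c s :=
    (hasDensity_modEq hM m).le_add_sum hδ hdensity hcover
  rw [sub_div, sub_le_iff_le_add]
  exact hle.trans (add_le_add_right hsum δ)

theorem exists_pos_hasDensity_divisorsIn (hS : Thin S) {P : Set (Set ℕ)} {m : ℕ} (hm : m ≠ 0)
    (hmP : divisorsIn S m ∈ P) : ∃ δ, 0 < δ ∧ HasDensity {n | divisorsIn S n ∈ P} δ := by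
  choose δ hδ using exists_hasDensity_divisorsIn_inter_Iio S P
  obtain ⟨d, hd, hdensity⟩ := exists_tendsto_hasDensity_divisorsIn hS hδ
  have htail : Tendsto (fun T ↦ m * reciprocalSum (S ∩ Set.Ici T)) atTop (𝓝 0) := by
    simpa using (tendsto_reciprocalSum_inter_Ici hS).const_mul (m : ℝ)
  obtain ⟨T, hT, hmT⟩ := ((htail.eventually_lt_const one_pos).and (eventually_gt_atTop m)).exists
  have hlower : (1 - m * reciprocalSum (S ∩ Set.Ici T)) / (T - 1)! ≤ d :=
    ge_of_tendsto hd <| (eventually_ge_atTop T).mono fun U hTU ↦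
      le_density_divisorsIn_inter_Iio hS hm hmP hmT hTU (hδ U)
  have hpos : 0 < (1 - m * reciprocalSum (S ∩ Set.Ici T)) / (T - 1)! :=
    div_pos (sub_pos.2 hT) (by positivity)
  exact ⟨d, hpos.trans_le hlower, hdensity⟩

end DivisorsIn

section DivisorSum

variable {G : Type*} [AddCommMonoid G] {f g : ℕ → G}

theorem sum_divisors_eq_finsum_divisorsIn (g : ℕ → G) {n : ℕ} (hn : n ≠ 0) :
    ∑ d ∈ n.divisors, g d = ∑ᶠ d ∈ divisorsIn {k | g k ≠ 0} n, g d := by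
  have hdivisors : (n.divisors : Set ℕ) ∩ Function.support g =
      divisorsIn {k | g k ≠ 0} n ∩ Function.support g := by
    ext d
    constructor
    · rintro ⟨hd, hgd⟩
      have hdn := Nat.dvd_of_mem_divisors (Finset.mem_coe.1 hd)
      exact ⟨⟨hgd, ne_zero_of_dvd_ne_zero hn hdn, hdn⟩, hgd⟩
    · rintro ⟨⟨_, _, hdn⟩, hgd⟩
      exact ⟨Finset.mem_coe.2 (Nat.mem_divisors.2 ⟨hdn, hn⟩), hgd⟩
  rw [← finsum_mem_coe_finset, ← finsum_mem_inter_support, hdivisors, finsum_mem_inter_support]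

theorem exists_ne_zero_of_divisorSum (hfg : ∀ n, 0 < n → f n = ∑ d ∈ n.divisors, g d)
    (hne : ∃ n, 0 < n ∧ (f n ≠ 0 ∨ g n ≠ 0)) : ∃ m, m ≠ 0 ∧ f m ≠ 0 := by
  by_contra! hf
  have hg (n : ℕ) (hn : 0 < n) : g n = 0 := by
    induction n using Nat.strong_induction_on with
    | _ n ih =>
      have hproper : ∑ d ∈ n.properDivisors, g d = 0 := Finset.sum_eq_zero fun d hd ↦
        ih d (Nat.mem_properDivisors.1 hd).2 (Nat.pos_of_mem_properDivisors hd)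
      have hsum := hfg n hn
      rwa [hf n hn.ne', ← Nat.cons_self_properDivisors hn.ne', Finset.sum_cons, hproper, add_zero,
        eq_comm] at hsum
  obtain ⟨n, hn, h | h⟩ := hne
  · exact h (hf n hn.ne')
  · exact h (hg n hn)

theorem mobius_pair_thin_supp_g_density_supp_f_general
    (hfg : ∀ n, 0 < n → f n = ∑ d ∈ n.divisors, g d)
    (hne : ∃ n, 0 < n ∧ (f n ≠ 0 ∨ g n ≠ 0)) (hthin : Thin {n | g n ≠ 0}) :
    ∃ δ, 0 < δ ∧ HasDensity {n | f n ≠ 0} δ := by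
  let P : Set (Set ℕ) := {D | ∑ᶠ d ∈ D, g d ≠ 0}
  have mem_P_iff (n : ℕ) (hn : n ≠ 0) : divisorsIn {k | g k ≠ 0} n ∈ P ↔ f n ≠ 0 := by
    rw [hfg n (Nat.pos_of_ne_zero hn), sum_divisors_eq_finsum_divisorsIn g hn]
    rfl
  obtain ⟨m, hm, hfm⟩ := exists_ne_zero_of_divisorSum hfg hne
  obtain ⟨δ, hδ, hdensity⟩ := exists_pos_hasDensity_divisorsIn hthin hm ((mem_P_iff m hm).2 hfm)
  exact ⟨δ, hδ, hdensity.congr mem_P_iff⟩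

end DivisorSum

/-- If `(f,g)` is a nonzero Möbius pair and `supp g` is thin, then `supp f`
has a positive asymptotic density. -/
theorem mobius_pair_thin_supp_g_density_supp_f (f g : ℕ → ℂ)
    (hfg : MobiusPair f g) (hne : ∃ n : ℕ, 0 < n ∧ (f n ≠ 0 ∨ g n ≠ 0))
    (hthin : Thin {n : ℕ | g n ≠ 0}) :
    ∃ δ : ℝ, 0 < δ ∧ HasDensity {n : ℕ | f n ≠ 0} δ :=
  mobius_pair_thin_supp_g_density_supp_f_general hfg hne hthin
end

section
/- If (f,g) is a Möbius pair of complex-valued arithmetic functions, not both identically zero, then it is impossible that both ∑_{n : f(n)≠0} 1/n < ∞ and ∑_{n : g(n)≠0} 1/n < ∞; that is, the supports of f and g cannot both be thin. -/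
open Filter

/-!
The sum of the reciprocals of the primes diverges. As `f` determines `g`, there is `n > 0` with
`f n ≠ 0`. For a prime `p`, every divisor of `n * p` divides `n` or has the form `e * p` with
`e ∣ n`, so `f (n * p) = f n ≠ 0` unless `g (e * p) ≠ 0` for some `e ∣ n`. Hence the primes are
covered by the quotient by `n` of the support of `f` and the quotients by the finitely many `e ∣ n`
of the support of `g`. Such quotients inherit thinness, so the two supports cannot both be thin.
-/

section Thin

variable {A B : Set ℕ}

lemma Thin.mono_s2 (hB : Thin B) (hAB : A ⊆ B) : Thin A :=
  Summable.comp_injective (i := Set.inclusion hAB) hB (Set.inclusion_injective hAB)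

lemma thin_empty : Thin ∅ :=
  summable_empty

lemma Thin.union (hA : Thin A) (hB : Thin B) : Thin (A ∪ B) := by
  have hBA : Thin (B \ A) := hB.mono_s2 Set.sdiff_subset
  rw [← Set.union_sdiff_self]
  exact (HasSum.add_disjoint (f := fun a : ℕ => (1 : ℝ) / a) Set.disjoint_sdiff_right
    (Summable.hasSum hA) (Summable.hasSum hBA)).summable

lemma Thin.biUnion {ι : Type*} {s : Finset ι} {C : ι → Set ℕ} (hC : ∀ i ∈ s, Thin (C i)) :
    Thin (⋃ i ∈ s, C i) := by
  rw [← Finset.sup_set_eq_biUnion]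
  exact Finset.sup_induction (p := Thin) thin_empty (fun _ h _ => h.union) hC

lemma Thin.preimage_mul_left (hA : Thin A) {m : ℕ} (hm : m ≠ 0) : Thin ((m * ·) ⁻¹' A) := by
  have hinj : Function.Injective fun b : (m * ·) ⁻¹' A => (⟨m * b, b.2⟩ : A) :=
    fun b c hbc => Subtype.ext (Nat.eq_of_mul_eq_mul_left (Nat.pos_of_ne_zero hm)
      (congrArg Subtype.val hbc))
  refine ((Summable.comp_injective hA hinj).mul_left (m : ℝ)).congr fun b => ?_
  have : (m : ℝ) ≠ 0 := Nat.cast_ne_zero.mpr hm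
  simp [field]

lemma not_thin_primes : ¬ Thin {p : ℕ | p.Prime} :=
  Nat.Primes.not_summable_one_div

end Thin

section DivisorSums

variable {M : Type*} [AddCommMonoid M] {f g : ℕ → M}

lemma eq_zero_of_sum_divisors_eq_zero (h : ∀ n, 0 < n → ∑ d ∈ n.divisors, g d = 0) :
    ∀ n, 0 < n → g n = 0 := by
  intro n
  induction n using Nat.strong_induction_on with
  | _ n ih =>
    intro hn
    have hproper : ∑ d ∈ n.properDivisors, g d = 0 :=
      Finset.sum_eq_zero fun d hd =>
        ih d (Nat.mem_properDivisors.mp hd).2 (Nat.pos_of_mem_properDivisors hd)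
    rw [← h n hn, ← Nat.insert_self_properDivisors hn.ne',
      Finset.sum_insert Nat.self_notMem_properDivisors, hproper, add_zero]

lemma sum_divisors_mul_prime_eq {n p : ℕ} (hn : n ≠ 0) (hp : p.Prime)
    (hg : ∀ e ∈ n.divisors, g (e * p) = 0) :
    ∑ d ∈ (n * p).divisors, g d = ∑ d ∈ n.divisors, g d := by
  have hnp : n * p ≠ 0 := mul_ne_zero hn hp.ne_zero
  refine (Finset.sum_subset (Nat.divisors_subset_of_dvd hnp (dvd_mul_right n p))
    fun d hd hdn => ?_).symm
  obtain ⟨e, b, he, hb, rfl⟩ := Nat.dvd_mul.mp (Nat.dvd_of_mem_divisors hd)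
  have hen : e ∈ n.divisors := Nat.mem_divisors.mpr ⟨he, hn⟩
  rcases (Nat.dvd_prime hp).mp hb with rfl | rfl
  · exact absurd (by simpa using hen) hdn
  · exact hg e hen

lemma primes_subset_union_preimage_support (hfg : ∀ n, 0 < n → f n = ∑ d ∈ n.divisors, g d)
    {n : ℕ} (hn : 0 < n) (hfn : f n ≠ 0) :
    {p : ℕ | p.Prime} ⊆ (n * ·) ⁻¹' {m | f m ≠ 0} ∪
      ⋃ e ∈ n.divisors, (e * ·) ⁻¹' {m | g m ≠ 0} := by
  intro p (hp : p.Prime)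
  by_cases hg : ∀ e ∈ n.divisors, g (e * p) = 0
  · left
    have hf : f (n * p) = f n := by
      rw [hfg _ (Nat.mul_pos hn hp.pos), sum_divisors_mul_prime_eq hn.ne' hp hg, ← hfg n hn]
    exact hf.trans_ne hfn
  · right
    push Not at hg
    obtain ⟨e, he, hge⟩ := hg
    exact Set.mem_biUnion he hge

theorem mobius_pair_not_both_thin_general
    (hfg : ∀ n, 0 < n → f n = ∑ d ∈ n.divisors, g d)
    (hne : ∃ n : ℕ, 0 < n ∧ (f n ≠ 0 ∨ g n ≠ 0)) :
    ¬ (Thin {n : ℕ | f n ≠ 0} ∧ Thin {n : ℕ | g n ≠ 0}) := by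
  rintro ⟨hf, hg⟩
  obtain ⟨n, hn, hfn⟩ : ∃ n, 0 < n ∧ f n ≠ 0 := by
    by_contra! hf0
    have hg0 := eq_zero_of_sum_divisors_eq_zero fun n hn => (hfg n hn).symm.trans (hf0 n hn)
    obtain ⟨n, hn, hfn | hgn⟩ := hne
    exacts [hfn (hf0 n hn), hgn (hg0 n hn)]
  have hquotients : Thin (⋃ e ∈ n.divisors, (e * ·) ⁻¹' {m | g m ≠ 0}) :=
    Thin.biUnion fun e he => hg.preimage_mul_left (Nat.pos_of_mem_divisors he).ne'
  exact not_thin_primes (((hf.preimage_mul_left hn.ne').union hquotients).mono_s2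
    (primes_subset_union_preimage_support hfg hn hfn))

end DivisorSums

/-- In a nonzero Möbius pair, the supports of `f` and `g` cannot both be thin. -/
theorem mobius_pair_not_both_thin (f g : ℕ → ℂ)
    (hfg : MobiusPair f g) (hne : ∃ n : ℕ, 0 < n ∧ (f n ≠ 0 ∨ g n ≠ 0)) :
    ¬ (Thin {n : ℕ | f n ≠ 0} ∧ Thin {n : ℕ | g n ≠ 0}) :=
  mobius_pair_not_both_thin_general hfg hne
end

section
/- Let Z be any increasing real-valued function on [2,∞) that tends to infinity. Then there exists a Möbius pair (f,g) of complex-valued arithmetic functions, not both identically zero, such that ∑_{n ≤ x, n ∈ supp(g)} 1/n < Z(x) for all sufficiently large x, while the support of f has asymptotic density zero. -/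
open Filter

/-!
For a set `P` of primes let `g` be the Möbius function restricted to integers all of whose prime
factors lie in `P`. Its divisor sum `f` is the indicator function of the integers with no prime
factor in `P`, so by the sieve of Eratosthenes `supp f` has density zero as soon as `∑_{p ∈ P} 1/p`
diverges. On the other hand `supp g` consists of squarefree integers, whence
`∑_{n ≤ x, n ∈ supp g} 1/n ≤ ∏_{p ∈ P, p ≤ x} (1 + 1/p) ≤ exp (∑_{p ∈ P, p ≤ x} 1/p)`.
It remains to choose `P` so that `∑_{p ∈ P} 1/p` diverges while its partial sums stay below `log Z`,
which a greedy selection achieves since the terms `1/p` are bounded and `∑ 1/p` over all primes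
diverges.
-/

section Greedy

open Classical in
/-- The sum of the terms `a k`, `k < n`, retained by the greedy selection: `a n` is retained when
doing so keeps the running total below `W` on all of `[n, ∞)`, and not just at `n`, as `W` may
decrease later. -/
noncomputable def greedySum (a : ℕ → ℝ) (W : ℝ → ℝ) : ℕ → ℝ
  | 0 => 0
  | n + 1 => if ∀ x : ℝ, n ≤ x → greedySum a W n + a n < W x then greedySum a W n + a n
      else greedySum a W n

/-- The set of indices retained by the greedy selection computing `greedySum`. -/
def greedySet (a : ℕ → ℝ) (W : ℝ → ℝ) : Set ℕ :=
  {n | ∀ x : ℝ, n ≤ x → greedySum a W n + a n < W x}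

variable {a : ℕ → ℝ} {W : ℝ → ℝ}

theorem greedySum_eq_sum_indicator (n : ℕ) :
    greedySum a W n = ∑ k ∈ Finset.range n, (greedySet a W).indicator a k := by
  classical
  induction n with
  | zero => rfl
  | succ n ih =>
    rw [Finset.sum_range_succ, ← ih, greedySum, Set.indicator_apply, greedySet, Set.mem_ofPred_eq]
    split_ifs <;> simp only [add_zero]

theorem greedySum_eq_zero_or_lt (n : ℕ) :
    greedySum a W n = 0 ∨ ∀ x : ℝ, n ≤ x + 1 → greedySum a W n < W x := by
  induction n with
  | zero => exact Or.inl rfl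
  | succ n ih =>
    rw [greedySum]
    split_ifs with hn
    · exact Or.inr fun x hx => hn x (by simpa using hx)
    · refine ih.imp_right fun h x hx => h x ?_
      push_cast at hx
      linarith

theorem eventually_greedySum_lt (hW : Tendsto W atTop atTop) :
    ∀ᶠ x : ℝ in atTop, greedySum a W (⌊x⌋₊ + 1) < W x := by
  filter_upwards [hW.eventually_gt_atTop 0, eventually_ge_atTop 0] with x hWx hx
  rcases greedySum_eq_zero_or_lt (a := a) (W := W) (⌊x⌋₊ + 1) with h | h
  · rwa [h]
  · exact h x (by simpa using Nat.floor_le hx)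

theorem not_summable_indicator_greedySet (ha : ∀ n, 0 ≤ a n) (hbdd : BddAbove (Set.range a))
    (hsum : ¬ Summable a) (hW : Tendsto W atTop atTop) :
    ¬ Summable ((greedySet a W).indicator a) := by
  intro hs
  obtain ⟨C, hC⟩ := hbdd
  have greedySum_le (n : ℕ) : greedySum a W n ≤ ∑' k, (greedySet a W).indicator a k := by
    rw [greedySum_eq_sum_indicator]
    exact hs.sum_le_tsum _ fun k _ => Set.indicator_nonneg (fun k _ => ha k) k
  obtain ⟨X, hX⟩ := eventually_atTop.1
    (hW.eventually_gt_atTop (∑' k, (greedySet a W).indicator a k + C))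
  have eventually_mem : ∀ᶠ n : ℕ in atTop, n ∈ greedySet a W := by
    filter_upwards [eventually_ge_atTop ⌈X⌉₊] with n hn x hx
    exact (add_le_add (greedySum_le n) (hC ⟨n, rfl⟩)).trans_lt
      (hX x ((Nat.ceil_le.1 hn).trans hx))
  exact hsum (hs.congr_atTop (eventually_mem.mono fun n hn => Set.indicator_of_mem hn a))

theorem exists_not_summable_indicator_sum_lt (ha : ∀ n, 0 ≤ a n) (hbdd : BddAbove (Set.range a))
    (hsum : ¬ Summable a) (hW : Tendsto W atTop atTop) :
    ∃ A : Set ℕ, ¬ Summable (A.indicator a) ∧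
      ∀ᶠ x : ℝ in atTop, ∑ k ∈ Finset.range (⌊x⌋₊ + 1), A.indicator a k < W x := by
  refine ⟨greedySet a W, not_summable_indicator_greedySet ha hbdd hsum hW, ?_⟩
  simpa only [greedySum_eq_sum_indicator] using eventually_greedySum_lt (a := a) hW

theorem exists_primes_not_summable_sum_one_div_lt (hW : Tendsto W atTop atTop) :
    ∃ P : Set ℕ, (∀ p ∈ P, p.Prime) ∧ ¬ Summable (P.indicator fun p => 1 / (p : ℝ)) ∧
      ∀ᶠ x : ℝ in atTop,
        ∑ p ∈ Finset.range (⌊x⌋₊ + 1), P.indicator (fun p => 1 / (p : ℝ)) p < W x := by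
  have one_div_le_one (n : ℕ) : 1 / (n : ℝ) ≤ 1 := by
    simpa only [one_div] using Nat.cast_inv_le_one n
  have hbdd : BddAbove (Set.range ({p | p.Prime}.indicator fun p : ℕ => 1 / (p : ℝ))) :=
    ⟨1, Set.forall_mem_range.2 fun n =>
      Set.indicator_apply_le' (fun _ => one_div_le_one n) fun _ => zero_le_one⟩
  obtain ⟨A, hA, hlt⟩ := exists_not_summable_indicator_sum_lt
    (Set.indicator_nonneg fun _ _ => by positivity) hbdd not_summable_one_div_on_primes hW
  rw [Set.indicator_indicator] at hA
  simp only [Set.indicator_indicator] at hlt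
  exact ⟨A ∩ {p | p.Prime}, fun p hp => hp.2, hA, hlt⟩

end Greedy

section PrimeProducts

variable {s : Finset ℕ}

theorem squarefree_prod_primes (hs : ∀ p ∈ s, p.Prime) : Squarefree (∏ p ∈ s, p) := by
  refine Finset.squarefree_prod_of_pairwise_isCoprime (fun p hp q hq hpq => ?_)
    fun p hp => (hs p hp).prime.squarefree
  exact Nat.coprime_iff_isRelPrime.1 ((Nat.coprime_primes (hs p hp) (hs q hq)).2 hpq)

theorem dvd_prod_primes_iff (hs : ∀ p ∈ s, p.Prime) {d : ℕ} :
    d ∣ ∏ p ∈ s, p ↔ Squarefree d ∧ d.primeFactors ⊆ s := by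
  refine ⟨fun h => ⟨(squarefree_prod_primes hs).squarefree_of_dvd h, ?_⟩, fun ⟨hd, hsub⟩ => ?_⟩
  · simpa only [Nat.primeFactors_prod hs] using
      Nat.primeFactors_mono h (squarefree_prod_primes hs).ne_zero
  · rw [← Nat.prod_primeFactors_of_squarefree hd]
    exact Finset.prod_dvd_prod_of_subset _ _ _ hsub

theorem sum_one_div_divisors_prod_primes (hs : ∀ p ∈ s, p.Prime) :
    ∑ d ∈ (∏ p ∈ s, p).divisors, 1 / (d : ℝ) = ∏ p ∈ s, (1 + 1 / (p : ℝ)) := by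
  let inv : ArithmeticFunction ℝ := ⟨fun n => 1 / (n : ℝ), by simp⟩
  have inv_mult : inv.IsMultiplicative := ⟨by simp [inv], fun {m n} _ => by simp [inv, mul_comm]⟩
  have h := inv_mult.prodPrimeFactors_one_add_of_squarefree (squarefree_prod_primes hs)
  rw [Nat.primeFactors_prod hs] at h
  exact h.symm

theorem totient_prod_primes_le (hs : ∀ p ∈ s, p.Prime) :
    ((∏ p ∈ s, p).totient : ℝ) ≤ (∏ p ∈ s, p : ℕ) * Real.exp (-∑ p ∈ s, 1 / (p : ℝ)) := by
  have totient_eq : ((∏ p ∈ s, p).totient : ℝ) =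
      (∏ p ∈ s, p : ℕ) * ∏ p ∈ s, (1 - 1 / (p : ℝ)) := by
    have h := Nat.totient_eq_mul_prod_factors (∏ p ∈ s, p)
    rw [Nat.primeFactors_prod hs] at h
    have h_real := congrArg (Rat.cast : ℚ → ℝ) h
    push_cast at h_real
    simpa only [one_div, Nat.cast_prod] using h_real
  rw [totient_eq, ← Finset.sum_neg_distrib, Real.exp_sum]
  gcongr
  · intro p _
    rw [sub_nonneg, one_div]
    exact Nat.cast_inv_le_one p
  · exact Real.one_sub_le_exp_neg _

end PrimeProducts

section Density

theorem countIn_le_of_coprime {A : Set ℕ} {M : ℕ} (hM : M ≠ 0)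
    (hA : ∀ n ∈ A, n ≠ 0 → M.Coprime n) (x : ℕ) :
    (countIn A x : ℝ) ≤ M.totient / M * x + M.totient := by
  classical
  have hcount : countIn A x ≤ M.totient * (x / M + 1) := by
    refine le_trans (Finset.card_le_card fun n hn => ?_) (Nat.Ico_filter_coprime_le 1 x hM)
    simp only [Finset.mem_filter, Finset.mem_Icc] at hn
    simp only [Finset.mem_filter, Finset.mem_Ico]
    exact ⟨by omega, hA n hn.2 (by omega)⟩
  calc (countIn A x : ℝ) ≤ M.totient * ((x / M : ℕ) + 1) := mod_cast hcount
    _ ≤ M.totient * (x / M + 1) := by gcongr; exact Nat.cast_div_le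
    _ = M.totient / M * x + M.totient := by ring

theorem hasDensity_zero_of_coprime {A : Set ℕ}
    (hA : ∀ ε : ℝ, 0 < ε → ∃ M : ℕ, M ≠ 0 ∧ (∀ n ∈ A, n ≠ 0 → M.Coprime n) ∧
      (M.totient : ℝ) / M < ε) :
    HasDensity A 0 := by
  refine tendsto_order.2 ⟨fun b hb => .of_forall fun x => hb.trans_le (by positivity),
    fun ε hε => ?_⟩
  obtain ⟨M, hM, hcop, hlt⟩ := hA ε hε
  have hlim : Tendsto (fun x : ℕ => (M.totient : ℝ) / M + M.totient / x) atTop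
      (nhds (M.totient / M)) := by
    simpa only [add_zero] using
      tendsto_const_nhds.add (tendsto_const_div_atTop_nhds_zero_nat (M.totient : ℝ))
  filter_upwards [hlim.eventually_lt_const hlt, eventually_gt_atTop 0] with x hx hx0
  have : (0 : ℝ) < x := mod_cast hx0
  calc (countIn A x : ℝ) / x ≤ (M.totient / M * x + M.totient) / x := by
        gcongr; exact countIn_le_of_coprime hM hcop x
    _ = M.totient / M + M.totient / x := by field_simp
    _ < ε := hx

theorem hasDensity_zero_of_not_dvd_primes {A P : Set ℕ} (hP : ∀ p ∈ P, p.Prime)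
    (hsum : ¬ Summable (P.indicator fun p => 1 / (p : ℝ)))
    (hA : ∀ n ∈ A, n ≠ 0 → ∀ p ∈ P, ¬ p ∣ n) :
    HasDensity A 0 := by
  classical
  refine hasDensity_zero_of_coprime fun ε hε => ?_
  have hdiv : Tendsto (fun N => ∑ p ∈ Finset.range N, P.indicator (fun p => 1 / (p : ℝ)) p)
      atTop atTop :=
    (not_summable_iff_tendsto_nat_atTop_of_nonneg
      (Set.indicator_nonneg fun _ _ => by positivity)).1 hsum
  obtain ⟨N, hN⟩ :=
    ((Real.tendsto_exp_neg_atTop_nhds_zero.comp hdiv).eventually_lt_const hε).exists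
  have hs : ∀ p ∈ (Finset.range N).filter (· ∈ P), p.Prime :=
    fun p hp => hP p (Finset.mem_filter.1 hp).2
  have hM := (squarefree_prod_primes hs).ne_zero
  refine ⟨_, hM, fun n hn hn0 => Nat.Coprime.prod_left fun p hp => ?_, ?_⟩
  · exact (hs p hp).coprime_iff_not_dvd.2 (hA n hn hn0 p (Finset.mem_filter.1 hp).2)
  · refine (div_le_of_le_mul₀ (by positivity) (Real.exp_nonneg _) ?_).trans_lt hN
    rw [mul_comm]
    simpa only [Function.comp_apply, Set.indicator_apply, ← Finset.sum_filter] using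
      totient_prod_primes_le hs

end Density

section MoebiusOn

open Classical in
/-- The Möbius function restricted to the integers all of whose prime factors lie in `P`, that is,
the multiplicative function supported on squarefree integers with value `-1` at the primes of `P`
and `0` at all other primes. -/
noncomputable def moebiusOn (P : Set ℕ) (n : ℕ) : ℤ :=
  if ∀ p ∈ n.primeFactors, p ∈ P then ArithmeticFunction.moebius n else 0

variable {P : Set ℕ}

theorem moebiusOn_one : moebiusOn P 1 = 1 := by
  simp [moebiusOn]

theorem moebiusOn_ne_zero_iff {n : ℕ} :
    moebiusOn P n ≠ 0 ↔ Squarefree n ∧ ∀ p ∈ n.primeFactors, p ∈ P := by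
  classical
  rw [moebiusOn, ite_ne_right_iff, ArithmeticFunction.moebius_ne_zero_iff_squarefree, and_comm]

open Classical in
theorem sum_divisors_moebiusOn {n : ℕ} (hn : n ≠ 0) :
    ∑ d ∈ n.divisors, moebiusOn P d = if ∀ p ∈ n.primeFactors, p ∉ P then 1 else 0 := by
  set s := n.primeFactors.filter (· ∈ P) with hs_def
  have hs : ∀ p ∈ s, p.Prime :=
    fun p hp => Nat.prime_of_mem_primeFactors (Finset.mem_filter.1 hp).1
  have hsn : ∏ p ∈ s, p ∣ n :=
    (Finset.prod_dvd_prod_of_subset _ _ _ (Finset.filter_subset _ _)).trans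
      (Nat.prod_primeFactors_dvd n)
  have prod_eq_one_iff : ∏ p ∈ s, p = 1 ↔ ∀ p ∈ n.primeFactors, p ∉ P := by
    rw [← Finset.filter_eq_empty_iff, ← hs_def]
    refine ⟨fun h => ?_, fun h => by rw [h, Finset.prod_empty]⟩
    rw [← Nat.primeFactors_prod hs, h, Nat.primeFactors_one]
  calc ∑ d ∈ n.divisors, moebiusOn P d = ∑ d ∈ (∏ p ∈ s, p).divisors, moebiusOn P d := by
        refine (Finset.sum_subset (Nat.divisors_subset_of_dvd hn hsn) fun d hd hds => ?_).symm
        contrapose! hds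
        obtain ⟨hsq, hdP⟩ := moebiusOn_ne_zero_iff.1 hds
        refine Nat.mem_divisors.2 ⟨(dvd_prod_primes_iff hs).2 ⟨hsq, fun p hp => ?_⟩,
          (squarefree_prod_primes hs).ne_zero⟩
        exact Finset.mem_filter.2
          ⟨Nat.primeFactors_mono (Nat.dvd_of_mem_divisors hd) hn hp, hdP p hp⟩
    _ = ∑ d ∈ (∏ p ∈ s, p).divisors, ArithmeticFunction.moebius d := by
        refine Finset.sum_congr rfl fun d hd => if_pos fun p hp => ?_
        have hds := ((dvd_prod_primes_iff hs).1 (Nat.dvd_of_mem_divisors hd)).2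
        exact (Finset.mem_filter.1 (hds hp)).2
    _ = if ∏ p ∈ s, p = 1 then 1 else 0 := by
        rw [← ArithmeticFunction.coe_mul_zeta_apply, ArithmeticFunction.moebius_mul_coe_zeta,
          ArithmeticFunction.one_apply]
    _ = if ∀ p ∈ n.primeFactors, p ∉ P then 1 else 0 := by simp only [prod_eq_one_iff]

theorem sum_one_div_support_moebiusOn_le (hP : ∀ p ∈ P, p.Prime) (m : ℕ) :
    (∑ n ∈ Finset.Icc 1 m, if moebiusOn P n ≠ 0 then 1 / (n : ℝ) else 0) ≤
      Real.exp (∑ p ∈ Finset.range (m + 1), P.indicator (fun p => 1 / (p : ℝ)) p) := by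
  classical
  set s := (Finset.range (m + 1)).filter (· ∈ P)
  have hs : ∀ p ∈ s, p.Prime := fun p hp => hP p (Finset.mem_filter.1 hp).2
  have support_subset :
      (Finset.Icc 1 m).filter (fun n => moebiusOn P n ≠ 0) ⊆ (∏ p ∈ s, p).divisors := by
    intro n hn
    obtain ⟨hnm, hn⟩ := Finset.mem_filter.1 hn
    obtain ⟨hsq, hnP⟩ := moebiusOn_ne_zero_iff.1 hn
    refine Nat.mem_divisors.2 ⟨(dvd_prod_primes_iff hs).2 ⟨hsq, fun p hp => ?_⟩,
      (squarefree_prod_primes hs).ne_zero⟩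
    have hpm : p ≤ m := (Nat.le_of_mem_primeFactors hp).trans (Finset.mem_Icc.1 hnm).2
    exact Finset.mem_filter.2 ⟨Finset.mem_range_succ_iff.2 hpm, hnP p hp⟩
  calc (∑ n ∈ Finset.Icc 1 m, if moebiusOn P n ≠ 0 then 1 / (n : ℝ) else 0)
      = ∑ n ∈ (Finset.Icc 1 m).filter (fun n => moebiusOn P n ≠ 0), 1 / (n : ℝ) :=
        (Finset.sum_filter _ _).symm
    _ ≤ ∑ d ∈ (∏ p ∈ s, p).divisors, 1 / (d : ℝ) :=
        Finset.sum_le_sum_of_subset_of_nonneg support_subset fun _ _ _ => by positivity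
    _ = ∏ p ∈ s, (1 + 1 / (p : ℝ)) := sum_one_div_divisors_prod_primes hs
    _ ≤ Real.exp (∑ p ∈ s, 1 / (p : ℝ)) := Real.prod_one_add_le_exp_sum _ fun _ => by positivity
    _ = Real.exp (∑ p ∈ Finset.range (m + 1), P.indicator (fun p => 1 / (p : ℝ)) p) := by
        simp only [Set.indicator_apply, ← Finset.sum_filter, s]

end MoebiusOn

theorem exists_mobius_pair_thin_like_g_sparse_f_general (Z : ℝ → ℝ)
    (hZinf : Tendsto Z atTop atTop) :
    ∃ f g : ℕ → ℂ, MobiusPair f g ∧ (∃ n : ℕ, 0 < n ∧ (f n ≠ 0 ∨ g n ≠ 0)) ∧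
      (∀ᶠ x : ℝ in atTop,
        (∑ n ∈ Finset.Icc 1 ⌊x⌋₊, if g n ≠ 0 then (1 : ℝ) / n else 0) < Z x) ∧
      HasDensity {n : ℕ | f n ≠ 0} 0 := by
  obtain ⟨P, hP, hdiv, hlt⟩ :=
    exists_primes_not_summable_sum_one_div_lt (Real.tendsto_log_atTop.comp hZinf)
  refine ⟨fun n => ∑ d ∈ n.divisors, (moebiusOn P d : ℂ), fun n => moebiusOn P n, fun n _ => rfl,
    ⟨1, one_pos, Or.inr (by simp [moebiusOn_one])⟩, ?_, ?_⟩
  · filter_upwards [hlt, hZinf.eventually_gt_atTop 0] with x hx hZx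
    simpa only [Int.cast_ne_zero] using
      (sum_one_div_support_moebiusOn_le hP ⌊x⌋₊).trans_lt ((Real.lt_log_iff_exp_lt hZx).1 hx)
  · refine hasDensity_zero_of_not_dvd_primes hP hdiv fun n hn hn0 p hp hpn => hn ?_
    have hsum : ∑ d ∈ n.divisors, moebiusOn P d = 0 := by
      rw [sum_divisors_moebiusOn hn0, if_neg]
      exact fun h => h p (Nat.mem_primeFactors.2 ⟨hP p hp, hpn, hn0⟩) hp
    simp only [← Int.cast_sum, hsum, Int.cast_zero]

/-- For any increasing `Z : [2,∞) → ℝ` tending to infinity, there is a nonzero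
Möbius pair `(f,g)` with `∑_{n ≤ x, n ∈ supp g} 1/n < Z(x)` for all large `x`,
while `supp f` has asymptotic density zero. -/
theorem exists_mobius_pair_thin_like_g_sparse_f (Z : ℝ → ℝ)
    (hZmono : MonotoneOn Z (Set.Ici (2 : ℝ))) (hZinf : Tendsto Z atTop atTop) :
    ∃ f g : ℕ → ℂ, MobiusPair f g ∧ (∃ n : ℕ, 0 < n ∧ (f n ≠ 0 ∨ g n ≠ 0)) ∧
      (∀ᶠ x : ℝ in atTop,
        (∑ n ∈ Finset.Icc 1 ⌊x⌋₊, if g n ≠ 0 then (1 : ℝ) / n else 0) < Z x) ∧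
      HasDensity {n : ℕ | f n ≠ 0} 0 :=
  exists_mobius_pair_thin_like_g_sparse_f_general Z hZinf
end
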